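/- arXiv:1507.00559 — 3 statements merged into one kernel-verified Lean document; each statement's English description precedes it below -/
import Mathlib

section
/- Let m ≥ n be positive integers with gcd(n,m) ≤ 3. Then the block-pass sliding game on the King grid K_{n+1,m+1} needs no blocks: opt^P_B(K_{n+1,m+1}) = 0, i.e., a robot starting at (1,1) can, using only sliding moves in the eight king directions with no blocks present, pass over every square of the (n+1)×(m+1) grid. -/
/-- Squares, given as (row, column) pairs of integers. -/
abbrev Sq : Type := ℤ × ℤ

/-- `p` is a square of the King grid `K_{N,M}` (rows `1..N`, columns `1..M`). -/
def inGrid (N M : ℕ) (p : Sq) : Prop :=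
  1 ≤ p.1 ∧ p.1 ≤ (N : ℤ) ∧ 1 ≤ p.2 ∧ p.2 ≤ (M : ℤ)

/-- The eight king directions (horizontal, vertical and diagonal). -/
def dirs8 : Set Sq :=
  {(1, 0), (-1, 0), (0, 1), (0, -1), (1, 1), (1, -1), (-1, 1), (-1, -1)}

/-- A square is free if it is on the grid and carries no block. -/
def Free (N M : ℕ) (B : Finset Sq) (p : Sq) : Prop := inGrid N M p ∧ p ∉ B

/-- Sliding from `p` in direction `d` travels exactly `k` steps: all squares along the
way are free, and the next square is off the grid or holds a block. -/
def IsSlideK (N M : ℕ) (B : Finset Sq) (p d : Sq) (k : ℕ) : Prop :=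
  (∀ t : ℕ, t ≤ k → Free N M B (p + (t : ℤ) • d)) ∧
    ¬ Free N M B (p + ((k : ℤ) + 1) • d)

/-- One move of the robot: slide from `p` in some king direction, stopping at `q`. -/
def MoveK (N M : ℕ) (B : Finset Sq) (p q : Sq) : Prop :=
  ∃ d ∈ dirs8, ∃ k : ℕ, IsSlideK N M B p d k ∧ q = p + (k : ℤ) • d

/-- The robot, starting on `p`, can stop on `q` after a finite sequence of moves. -/
def ReachesK (N M : ℕ) (B : Finset Sq) : Sq → Sq → Prop :=
  Relation.ReflTransGen (MoveK N M B)

/-- The robot, starting on `p₀`, passes over the square `s`: during some move of a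
finite sequence of moves it occupies or slides through `s`. -/
def PassesK (N M : ℕ) (B : Finset Sq) (p₀ s : Sq) : Prop :=
  ∃ p, ReachesK N M B p₀ p ∧ ∃ d ∈ dirs8, ∃ k t : ℕ,
    IsSlideK N M B p d k ∧ t ≤ k ∧ s = p + (t : ℤ) • d

/-- A legal block configuration: blocks are on grid squares, and not on `(1,1)`. -/
def BlocksOK (N M : ℕ) (B : Finset Sq) : Prop :=
  ((1 : ℤ), (1 : ℤ)) ∉ B ∧ ∀ p ∈ B, inGrid N M p

/-- `B` solves the block-pass game on the King grid `K_{N,M}`: starting from `(1,1)`,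
the robot can pass over every square not in `B`. -/
def SolvesPassK (N M : ℕ) (B : Finset Sq) : Prop :=
  BlocksOK N M B ∧ ∀ s : Sq, inGrid N M s → s ∉ B → PassesK N M B (1, 1) s

/-- `opt^P_B(K_{N,M})`: the minimum number of blocks solving the block-pass game on
the King grid `K_{N,M}`. -/
noncomputable def optPBK (N M : ℕ) : ℕ :=
  sInf {k | ∃ B : Finset Sq, SolvesPassK N M B ∧ B.card = k}

theorem slide_of (N M : ℕ) (x y a b k : ℤ) (hk : 0 ≤ k) (hd : ((a, b) : Sq) ∈ dirs8)
    (h1 : inGrid N M (x, y)) (h2 : inGrid N M (x + k * a, y + k * b))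
    (h3 : ¬ inGrid N M (x + (k + 1) * a, y + (k + 1) * b)) :
    IsSlideK N M ∅ (x, y) (a, b) k.toNat := by
  have hk' : (k.toNat : ℤ) = k := Int.toNat_of_nonneg hk
  refine ⟨?_, ?_⟩
  · intro t ht
    refine ⟨?_, by simp⟩
    have ht' : (t : ℤ) ≤ k := by omega
    simp only [dirs8, Set.mem_insert_iff, Set.mem_singleton_iff, Prod.mk.injEq] at hd
    simp only [inGrid, Prod.fst_add, Prod.snd_add, Prod.smul_fst, Prod.smul_snd, smul_eq_mul]
      at h1 h2 ⊢
    rcases hd with ⟨rfl, rfl⟩ | ⟨rfl, rfl⟩ | ⟨rfl, rfl⟩ | ⟨rfl, rfl⟩ | ⟨rfl, rfl⟩ | ⟨rfl, rfl⟩ |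
      ⟨rfl, rfl⟩ | ⟨rfl, rfl⟩ <;> omega
  · rintro ⟨h, -⟩
    apply h3
    rw [hk'] at h
    simpa [inGrid] using h

/-- Zero-based reachability. -/
def RR (n m : ℕ) (i j : ℤ) : Prop := ReachesK (n + 1) (m + 1) ∅ (1, 1) (1 + i, 1 + j)

theorem RR_step (n m : ℕ) (i j a b k i' j' : ℤ) (h : RR n m i j) (hk : 0 ≤ k)
    (hd : ((a, b) : Sq) ∈ dirs8)
    (h1 : 0 ≤ i ∧ i ≤ n ∧ 0 ≤ j ∧ j ≤ m)
    (h2 : 0 ≤ i' ∧ i' ≤ n ∧ 0 ≤ j' ∧ j' ≤ m)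
    (hi : i' = i + k * a) (hj : j' = j + k * b)
    (h3 : ¬ (0 ≤ i' + a ∧ i' + a ≤ n ∧ 0 ≤ j' + b ∧ j' + b ≤ m)) :
    RR n m i' j' := by
  refine Relation.ReflTransGen.tail h ⟨(a, b), hd, k.toNat, ?_, ?_⟩
  · apply slide_of _ _ _ _ _ _ _ hk hd
    · simp only [inGrid]; push_cast; omega
    · simp only [inGrid]; push_cast; omega
    · simp only [inGrid, add_mul, one_mul]; push_cast; omega
  · rw [Int.toNat_of_nonneg hk]
    ext <;> simp <;> omega

theorem pass_of (n m : ℕ) (i j a b k t i' j' : ℤ) (h : RR n m i j) (hk : 0 ≤ k)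
    (ht : 0 ≤ t ∧ t ≤ k)
    (hd : ((a, b) : Sq) ∈ dirs8)
    (h1 : 0 ≤ i ∧ i ≤ n ∧ 0 ≤ j ∧ j ≤ m)
    (h2 : 0 ≤ i + k * a ∧ i + k * a ≤ n ∧ 0 ≤ j + k * b ∧ j + k * b ≤ m)
    (hi : i' = i + t * a) (hj : j' = j + t * b)
    (h3 : ¬ (0 ≤ i + k * a + a ∧ i + k * a + a ≤ n ∧ 0 ≤ j + k * b + b ∧ j + k * b + b ≤ m)) :
    PassesK (n + 1) (m + 1) ∅ (1, 1) (1 + i', 1 + j') := by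
  refine ⟨_, h, (a, b), hd, k.toNat, t.toNat, ?_, by omega, ?_⟩
  · apply slide_of _ _ _ _ _ _ _ hk hd
    · simp only [inGrid]; push_cast; omega
    · simp only [inGrid]; push_cast; omega
    · simp only [inGrid, add_mul, one_mul]; push_cast; omega
  · rw [Int.toNat_of_nonneg ht.1]
    ext <;> simp <;> omega

def TT (n m : ℕ) (j : ℤ) : Prop :=
  RR n m 0 j ∧ RR n m n j ∧ RR n m 0 (m - j) ∧ RR n m n (m - j)

def LL (n m : ℕ) (i : ℤ) : Prop :=
  RR n m i 0 ∧ RR n m i m ∧ RR n m (n - i) 0 ∧ RR n m (n - i) m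

theorem TT_zero (n m : ℕ) : TT n m 0 := by
  have h : RR n m 0 0 := Relation.ReflTransGen.refl
  have h1 : RR n m n 0 := by
    apply RR_step n m 0 0 1 0 n _ _ h <;> first | omega | simp [dirs8]
  have h2 : RR n m 0 m := by
    apply RR_step n m 0 0 0 1 m _ _ h <;> first | omega | simp [dirs8]
  have h3 : RR n m n m := by
    apply RR_step n m 0 m 1 0 n _ _ h2 <;> first | omega | simp [dirs8]
  refine ⟨h, h1, ?_, ?_⟩ <;> simpa

theorem TT_refl (n m : ℕ) (j : ℤ) (h : TT n m j) : TT n m (m - j) := by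
  obtain ⟨a, b, c, d⟩ := h
  refine ⟨c, d, ?_, ?_⟩ <;> simpa

theorem LL_refl (n m : ℕ) (j : ℤ) (h : LL n m j) : LL n m (n - j) := by
  obtain ⟨a, b, c, d⟩ := h
  refine ⟨c, d, ?_, ?_⟩ <;> simpa

theorem TT_add (n m : ℕ) (j : ℤ) (hj : 0 ≤ j) (hj' : j + n ≤ m) (h : TT n m j) :
    TT n m (j + n) := by
  obtain ⟨a, b, c, d⟩ := h
  refine ⟨?_, ?_, ?_, ?_⟩
  · apply RR_step n m n j (-1) 1 n _ _ b <;> first | omega | simp [dirs8]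
  · apply RR_step n m 0 j 1 1 n _ _ a <;> first | omega | simp [dirs8]
  · apply RR_step n m n (m - j) (-1) (-1) n _ _ d <;> first | omega | simp [dirs8]
  · apply RR_step n m 0 (m - j) 1 (-1) n _ _ c <;> first | omega | simp [dirs8]

theorem TT_sub (n m : ℕ) (j : ℤ) (hj : 0 ≤ j) (hj' : j + n ≤ m) (h : TT n m (j + n)) :
    TT n m j := by
  have h1 := TT_refl _ _ _ (TT_add n m (m - (j + n)) (by omega) (by omega) (TT_refl _ _ _ h))
  have e : (m : ℤ) - (m - (j + n) + n) = j := by ring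
  rwa [e] at h1

theorem TT_LL (n m : ℕ) (hnm : n ≤ m) (j : ℤ) (hj : 0 ≤ j) (hj' : j ≤ n) (h : TT n m j) :
    LL n m j := by
  obtain ⟨a, b, c, d⟩ := h
  refine ⟨?_, ?_, ?_, ?_⟩
  · apply RR_step n m 0 j 1 (-1) j _ _ a <;> first | omega | simp [dirs8]
  · apply RR_step n m 0 (m - j) 1 1 j _ _ c <;> first | omega | simp [dirs8]
  · apply RR_step n m n j (-1) (-1) j _ _ b <;> first | omega | simp [dirs8]
  · apply RR_step n m n (m - j) (-1) 1 j _ _ d <;> first | omega | simp [dirs8]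

theorem LL_TT (n m : ℕ) (hnm : n ≤ m) (j : ℤ) (hj : 0 ≤ j) (hj' : j ≤ n) (h : LL n m j) :
    TT n m j := by
  obtain ⟨a, b, c, d⟩ := h
  refine ⟨?_, ?_, ?_, ?_⟩
  · apply RR_step n m j 0 (-1) 1 j _ _ a <;> first | omega | simp [dirs8]
  · apply RR_step n m (n - j) 0 1 1 j _ _ c <;> first | omega | simp [dirs8]
  · apply RR_step n m j m (-1) (-1) j _ _ b <;> first | omega | simp [dirs8]
  · apply RR_step n m (n - j) m 1 (-1) j _ _ d <;> first | omega | simp [dirs8]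

theorem TT_mul (n m : ℕ) (r : ℤ) (hr : 0 ≤ r) (k : ℕ) (h : r + k * n ≤ m) :
    TT n m (r + k * n) ↔ TT n m r := by
  induction k with
  | zero => simp
  | succ k ih =>
    have e : r + ((k + 1 : ℕ) : ℤ) * n = (r + k * n) + n := by push_cast; ring
    rw [e] at h ⊢
    have hp : 0 ≤ (k : ℤ) * n := by positivity
    rw [← ih (by omega)]
    exact ⟨TT_sub n m _ (by omega) h, TT_add n m _ (by omega) h⟩

theorem TT_mod (n m : ℕ) (hn : 1 ≤ n) (z : ℤ) (hz : 0 ≤ z) (hz' : z ≤ m) :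
    TT n m z ↔ TT n m (z % n) := by
  have e : z % n + ((z / n).toNat : ℤ) * n = z := by
    rw [Int.toNat_of_nonneg (Int.ediv_nonneg hz (by omega))]
    exact Int.emod_add_ediv_mul z n
  have := TT_mul n m (z % n) (Int.emod_nonneg _ (by omega)) (z / n).toNat (by rw [e]; exact hz')
  rwa [e] at this

theorem TT_all (n m : ℕ) (hn : 1 ≤ n) (hnm : n ≤ m) (z : ℤ) (hz : 0 ≤ z) (hz' : z ≤ m)
    (hg : (Nat.gcd n m : ℤ) ∣ z) : TT n m z := by
  have hneg : ∀ w : ℤ, TT n m (w % n) → TT n m ((-w) % n) := by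
    intro w hw
    have r0 := Int.emod_nonneg w (b := n) (by omega)
    have r1 := Int.emod_lt_of_pos w (b := n) (by omega)
    have h1 := LL_TT n m hnm _ (by omega) (by omega)
      (LL_refl _ _ _ (TT_LL n m hnm _ r0 r1.le hw))
    rw [TT_mod n m hn _ (by omega) (by omega)] at h1
    convert h1 using 1
    apply Int.emod_emod_of_dvd _ (dvd_refl (n : ℤ)) |>.symm.trans
    rw [Int.emod_emod_of_dvd _ (dvd_refl _), Int.emod_eq_emod_iff_emod_sub_eq_zero,
      ← Int.dvd_iff_emod_eq_zero]
    have e := Int.emod_add_mul_ediv w n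
    exact ⟨-(w / n) - 1, by linear_combination e⟩
  have hrefl : ∀ w : ℤ, TT n m (w % n) → TT n m ((m - w) % n) := by
    intro w hw
    have r0 := Int.emod_nonneg w (b := n) (by omega)
    have r1 := Int.emod_lt_of_pos w (b := n) (by omega)
    have h1 := TT_refl _ _ _ hw
    rw [TT_mod n m hn _ (by omega) (by omega)] at h1
    convert h1 using 1
    simp [Int.sub_emod]
  have hadd : ∀ w : ℤ, TT n m (w % n) → TT n m ((w + m) % n) := by
    intro w hw
    have := hrefl _ (hneg w hw)
    rwa [sub_neg_eq_add, add_comm] at this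
  have hnat : ∀ k : ℕ, TT n m (((k : ℤ) * m) % n) := by
    intro k
    induction k with
    | zero => simpa using TT_zero n m
    | succ k ih =>
      have := hadd _ ih
      convert this using 2
      push_cast; ring
  have hallint : ∀ k : ℤ, TT n m ((k * m) % n) := by
    intro k
    rcases Int.eq_nat_or_neg k with ⟨l, rfl | rfl⟩
    · exact hnat l
    · have := hneg _ (hnat l)
      rwa [← neg_mul] at this
  rw [TT_mod n m hn z hz hz']
  obtain ⟨c, rfl⟩ := hg
  have := hallint (Nat.gcdB n m * c)
  convert this using 1
  rw [Nat.gcd_eq_gcd_ab]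
  have e : ((n : ℤ) * Nat.gcdA n m + m * Nat.gcdB n m) * c
    = Nat.gcdB n m * c * m + n * (Nat.gcdA n m * c) := by ring
  rw [e, Int.add_mul_emod_self_left]

theorem pass_all (n m : ℕ) (hn : 1 ≤ n) (hnm : n ≤ m) (hgcd : Nat.gcd n m ≤ 3)
    (i j : ℤ) (hi : 0 ≤ i) (hi' : i ≤ n) (hj : 0 ≤ j) (hj' : j ≤ m) :
    PassesK (n + 1) (m + 1) ∅ (1, 1) (1 + i, 1 + j) := by
  have hT := TT_all n m hn hnm
  have hL : ∀ z : ℤ, 0 ≤ z → z ≤ n → (Nat.gcd n m : ℤ) ∣ z → LL n m z := fun z h1 h2 h3 =>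
    TT_LL n m hnm z h1 h2 (hT z h1 (by omega) h3)
  have hgm : (Nat.gcd n m : ℤ) ∣ m := by exact_mod_cast Nat.gcd_dvd_right n m
  have hg0 : 0 < Nat.gcd n m := Nat.gcd_pos_of_pos_left _ hn
  have key : (Nat.gcd n m : ℤ) ∣ j ∨ (Nat.gcd n m : ℤ) ∣ i ∨ (Nat.gcd n m : ℤ) ∣ i + j ∨
      (Nat.gcd n m : ℤ) ∣ j - i := by
    generalize Nat.gcd n m = g at hg0 hgcd
    have h3 : g = 1 ∨ g = 2 ∨ g = 3 := by omega
    rcases h3 with rfl | rfl | rfl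
    · simp
    · push_cast; omega
    · push_cast
      have hi3 : i % 3 = 0 ∨ i % 3 = 1 ∨ i % 3 = 2 := by omega
      have hj3 : j % 3 = 0 ∨ j % 3 = 1 ∨ j % 3 = 2 := by omega
      rcases hi3 with h | h | h <;> rcases hj3 with h' | h' | h' <;>
        first
        | exact Or.inl (by omega)
        | exact Or.inr (Or.inl (by omega))
        | exact Or.inr (Or.inr (Or.inl (by omega)))
        | exact Or.inr (Or.inr (Or.inr (by omega)))
  rcases key with h | h | h | h
  · have a := (hT j hj hj' h).1
    apply pass_of n m 0 j 1 0 n i _ _ a <;> first | omega | simp [dirs8]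
  · have a := (hL i hi hi' h).1
    apply pass_of n m i 0 0 1 m j _ _ a <;> first | omega | simp [dirs8]
  · by_cases hs : i + j ≤ m
    · have a := (hT (i + j) (by omega) hs h).1
      apply pass_of n m 0 (i + j) 1 (-1) (min n (i + j)) i _ _ a <;> first | omega | simp [dirs8]
    · have a := (hL (i + j - m) (by omega) (by omega) (dvd_sub h hgm)).2.1
      apply pass_of n m (i + j - m) m 1 (-1) (min (n - (i + j - m)) m) (m - j) _ _ a <;>
        first | omega | simp [dirs8]
  · by_cases hs : i ≤ j
    · have a := (hT (j - i) (by omega) (by omega) h).1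
      apply pass_of n m 0 (j - i) 1 1 (min n (m - (j - i))) i _ _ a <;>
        first | omega | simp [dirs8]
    · have a := (hL (i - j) (by omega) (by omega) ((dvd_sub_comm).1 h)).1
      apply pass_of n m (i - j) 0 1 1 (min (n - (i - j)) m) j _ _ a <;>
        first | omega | simp [dirs8]

/-- If `m ≥ n ≥ 1` and `gcd(n,m) ≤ 3`, then the block-pass game on the King grid
`K_{n+1,m+1}` needs no blocks: the empty configuration is a solution, and
`opt^P_B(K_{n+1,m+1}) = 0`. -/
theorem stmt9 (n m : ℕ) (hn : 1 ≤ n) (hnm : n ≤ m) (hgcd : Nat.gcd n m ≤ 3) :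
    SolvesPassK (n + 1) (m + 1) (∅ : Finset Sq) ∧ optPBK (n + 1) (m + 1) = 0 := by
  have h : SolvesPassK (n + 1) (m + 1) (∅ : Finset Sq) := by
    refine ⟨⟨by simp, by simp⟩, ?_⟩
    rintro ⟨x, y⟩ hs -
    simp only [inGrid] at hs
    push_cast at hs
    have := pass_all n m hn hnm hgcd (x - 1) (y - 1) (by omega) (by omega) (by omega) (by omega)
    simpa using this
  refine ⟨h, ?_⟩
  unfold optPBK
  exact Nat.sInf_eq_zero.2 (Or.inl ⟨∅, h, by simp⟩)
end

section
/- For all positive integers m ≥ n, the block-pass sliding game on the King grid satisfies opt^P_B(K_{n+1,m+1}) ≤ ⌈(gcd(n,m) − 3)/8⌉. -/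
/-- The blocks: top row squares with (zero-based) columns in `X`. -/
def topB (X : Finset ℤ) : Finset Sq := X.image (fun x => ((1 : ℤ), x + 1))

/-- Top row square with zero-based column `x` is reachable. -/
def TR (n m : ℕ) (X : Finset ℤ) (x : ℤ) : Prop :=
  ReachesK (n + 1) (m + 1) (topB X) (1, 1) (1, x + 1)

/-- The residue class of `x` is free from blocks. -/
def Good (g : ℤ) (X : Finset ℤ) (x : ℤ) : Prop := ∀ y ∈ X, ¬ g ∣ y - x ∧ ¬ g ∣ y + x

/-- All top row squares of the class of `r` are reachable. -/
def Cl (n m : ℕ) (g : ℤ) (X : Finset ℤ) (r : ℤ) : Prop :=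
  ∀ x : ℤ, 0 ≤ x → x ≤ m → (g ∣ x - r ∨ g ∣ x + r) → TR n m X x

lemma mem_topB (X : Finset ℤ) (a b : ℤ) : ((a, b) : Sq) ∈ topB X ↔ a = 1 ∧ b - 1 ∈ X := by
  unfold topB
  rw [Finset.mem_image]
  constructor
  · rintro ⟨x, hx, h⟩
    rw [Prod.mk.injEq] at h
    refine ⟨h.1.symm, ?_⟩
    rw [← h.2]; simpa using hx
  · rintro ⟨h1, h2⟩
    exact ⟨b - 1, h2, by rw [Prod.mk.injEq]; constructor <;> omega⟩

lemma free_iff (n m : ℕ) (X : Finset ℤ) (a b : ℤ) :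
    Free (n + 1) (m + 1) (topB X) (a, b) ↔
      (1 ≤ a ∧ a ≤ n + 1 ∧ 1 ≤ b ∧ b ≤ m + 1) ∧ ¬ (a = 1 ∧ b - 1 ∈ X) := by
  unfold Free inGrid
  rw [mem_topB]
  push_cast
  rfl

lemma move_of (n m : ℕ) (X : Finset ℤ) (a b d e : ℤ) (k : ℕ) (hd : ((d, e) : Sq) ∈ dirs8)
    (h1 : ∀ t : ℤ, 0 ≤ t → t ≤ k → (1 ≤ a + t * d ∧ a + t * d ≤ n + 1 ∧ 1 ≤ b + t * e ∧
      b + t * e ≤ m + 1) ∧ ¬ (a + t * d = 1 ∧ b + t * e - 1 ∈ X))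
    (h2 : ¬ ((1 ≤ a + (k + 1) * d ∧ a + (k + 1) * d ≤ n + 1 ∧ 1 ≤ b + (k + 1) * e ∧
      b + (k + 1) * e ≤ m + 1) ∧ ¬ (a + (k + 1) * d = 1 ∧ b + (k + 1) * e - 1 ∈ X))) :
    MoveK (n + 1) (m + 1) (topB X) (a, b) (a + k * d, b + k * e) := by
  refine ⟨(d, e), hd, k, ⟨?_, ?_⟩, ?_⟩
  · intro t ht
    have := h1 t (by positivity) (by exact_mod_cast ht)
    simp only [Prod.smul_mk, Prod.mk_add_mk, smul_eq_mul]
    rw [free_iff]; exact this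
  · simp only [Prod.smul_mk, Prod.mk_add_mk, smul_eq_mul]
    rw [free_iff]; exact h2
  · simp only [Prod.smul_mk, Prod.mk_add_mk, smul_eq_mul]

lemma pass_of_s10 (n m : ℕ) (X : Finset ℤ) (a b d e t0 u v : ℤ) (hd : ((d, e) : Sq) ∈ dirs8)
    (ht0 : 0 ≤ t0)
    (hr : ReachesK (n + 1) (m + 1) (topB X) (1, 1) (a, b))
    (h1 : ∀ t : ℤ, 0 ≤ t → t ≤ t0 → (1 ≤ a + t * d ∧ a + t * d ≤ n + 1 ∧ 1 ≤ b + t * e ∧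
      b + t * e ≤ m + 1) ∧ ¬ (a + t * d = 1 ∧ b + t * e - 1 ∈ X))
    (hu : u = a + t0 * d) (hv : v = b + t0 * e) :
    PassesK (n + 1) (m + 1) (topB X) (1, 1) (u, v) := by
  classical
  obtain ⟨t0, rfl⟩ := Int.eq_ofNat_of_zero_le ht0
  have hde : d = 1 ∨ d = -1 ∨ e = 1 ∨ e = -1 := by
    simp only [dirs8, Set.mem_insert_iff, Set.mem_singleton_iff, Prod.mk.injEq] at hd
    omega
  have hex : ∃ k : ℕ, ¬ Free (n + 1) (m + 1) (topB X) (a + k * d, b + k * e) := by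
    by_contra! hall
    have h0 := hall 0
    have hN := hall (n + m + 5)
    rw [free_iff] at h0 hN
    push_cast at h0 hN
    rcases hde with h | h | h | h <;> subst h <;> omega
  have hsp := Nat.find_spec hex
  have hmin := fun k => Nat.find_min (m := k) hex
  have hgt : t0 < Nat.find hex := by
    by_contra! hle
    apply hsp
    rw [free_iff]
    exact h1 _ (by positivity) (by exact_mod_cast hle)
  refine ⟨(a, b), hr, (d, e), hd, Nat.find hex - 1, t0, ⟨?_, ?_⟩, by omega, ?_⟩
  · intro t ht
    have := hmin t (by omega)
    simp only [Prod.smul_mk, Prod.mk_add_mk, smul_eq_mul]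
    exact not_not.mp this
  · simp only [Prod.smul_mk, Prod.mk_add_mk, smul_eq_mul]
    have : (((Nat.find hex - 1 : ℕ) : ℤ) + 1) = (Nat.find hex : ℤ) := by omega
    rw [this]; exact hsp
  · simp only [Prod.smul_mk, Prod.mk_add_mk, smul_eq_mul, hu, hv]

lemma reach_move (n m : ℕ) (X : Finset ℤ) (a b d e k a' b' : ℤ) (hk : 0 ≤ k)
    (hr : ReachesK (n + 1) (m + 1) (topB X) (1, 1) (a, b))
    (hd : ((d, e) : Sq) ∈ dirs8)
    (h1 : ∀ t : ℤ, 0 ≤ t → t ≤ k → (1 ≤ a + t * d ∧ a + t * d ≤ n + 1 ∧ 1 ≤ b + t * e ∧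
      b + t * e ≤ m + 1) ∧ ¬ (a + t * d = 1 ∧ b + t * e - 1 ∈ X))
    (h2 : ¬ ((1 ≤ a + (k + 1) * d ∧ a + (k + 1) * d ≤ n + 1 ∧ 1 ≤ b + (k + 1) * e ∧
      b + (k + 1) * e ≤ m + 1) ∧ ¬ (a + (k + 1) * d = 1 ∧ b + (k + 1) * e - 1 ∈ X)))
    (ha : a' = a + k * d) (hb : b' = b + k * e) :
    ReachesK (n + 1) (m + 1) (topB X) (1, 1) (a', b') := by
  obtain ⟨k, rfl⟩ := Int.eq_ofNat_of_zero_le hk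
  subst ha hb
  exact Relation.ReflTransGen.tail hr (move_of n m X a b d e k hd h1 h2)

/-- A convenient form: squares on the top row along the way all have column outside `X`. -/
lemma not_top {X : Finset ℤ} {x a b : ℤ} (hx : x ∉ X) (h : a = 1 → b - 1 = x) :
    ¬ (a = 1 ∧ b - 1 ∈ X) := by
  rintro ⟨h1, h2⟩
  rw [h h1] at h2
  exact hx h2

lemma dR : ((0, 1) : Sq) ∈ dirs8 := by simp [dirs8]
lemma dL : ((0, -1) : Sq) ∈ dirs8 := by simp [dirs8]
lemma dD : ((1, 0) : Sq) ∈ dirs8 := by simp [dirs8]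
lemma dU : ((-1, 0) : Sq) ∈ dirs8 := by simp [dirs8]
lemma dDR : ((1, 1) : Sq) ∈ dirs8 := by simp [dirs8]
lemma dDL : ((1, -1) : Sq) ∈ dirs8 := by simp [dirs8]
lemma dUR : ((-1, 1) : Sq) ∈ dirs8 := by simp [dirs8]
lemma dUL : ((-1, -1) : Sq) ∈ dirs8 := by simp [dirs8]

section ops
variable {n m : ℕ} {X : Finset ℤ}

/-- from the top row to the left column -/
lemma to_left (hnm : n ≤ m) (h0 : (0 : ℤ) ∉ X) {x : ℤ} (hx : x ∉ X) (x0 : 0 ≤ x) (xn : x ≤ n)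
    (h : TR n m X x) : ReachesK (n + 1) (m + 1) (topB X) (1, 1) (x + 1, 1) := by
  refine reach_move n m X 1 (x + 1) 1 (-1) x _ _ x0 h dDL ?_ ?_ (by ring) (by ring)
  · intro t t0 t1
    exact ⟨by omega, not_top hx (by omega)⟩
  · omega

lemma to_right {x : ℤ} (hx : x ∉ X) (hnm : n ≤ m) (x0 : (m : ℤ) - n ≤ x) (xn : x ≤ m)
    (h : TR n m X x) :
    ReachesK (n + 1) (m + 1) (topB X) (1, 1) (m - x + 1, m + 1) := by
  refine reach_move n m X 1 (x + 1) 1 1 (m - x) _ _ (by omega) h dDR ?_ ?_ (by ring) (by ring)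
  · intro t t0 t1
    exact ⟨by omega, not_top hx (by omega)⟩
  · omega

lemma to_bot {x : ℤ} (hx : x ∉ X) (x0 : 0 ≤ x) (xm : x ≤ m)
    (h : TR n m X x) :
    ReachesK (n + 1) (m + 1) (topB X) (1, 1) (n + 1, x + 1) := by
  refine reach_move n m X 1 (x + 1) 1 0 n _ _ (by omega) h dD ?_ ?_ (by ring) (by ring)
  · intro t t0 t1
    exact ⟨by omega, not_top hx (by omega)⟩
  · omega

lemma op_addn {x : ℤ} (hn : 1 ≤ n) (hx : x ∉ X) (hx' : x + n ∉ X) (x0 : 0 ≤ x) (xm : x + n ≤ m)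
    (h : TR n m X x) : TR n m X (x + n) := by
  have h1 : ReachesK (n + 1) (m + 1) (topB X) (1, 1) (n + 1, x + n + 1) := by
    refine reach_move n m X 1 (x + 1) 1 1 n _ _ (by omega) h dDR ?_ ?_ (by ring) (by ring)
    · intro t t0 t1
      exact ⟨by omega, not_top hx (by omega)⟩
    · omega
  refine reach_move n m X _ _ (-1) 0 n _ _ (by omega) h1 dU ?_ ?_ (by ring) (by ring)
  · intro t t0 t1
    exact ⟨by omega, not_top hx' (by omega)⟩
  · omega

lemma op_subn {x : ℤ} (hn : 1 ≤ n) (hx : x ∉ X) (hx' : x - n ∉ X) (x0 : 0 ≤ x - n) (xm : x ≤ m)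
    (h : TR n m X x) : TR n m X (x - n) := by
  have h1 : ReachesK (n + 1) (m + 1) (topB X) (1, 1) (n + 1, x - n + 1) := by
    refine reach_move n m X 1 (x + 1) 1 (-1) n _ _ (by omega) h dDL ?_ ?_ (by ring) (by ring)
    · intro t t0 t1
      exact ⟨by omega, not_top hx (by omega)⟩
    · omega
  refine reach_move n m X _ _ (-1) 0 n _ _ (by omega) h1 dU ?_ ?_ (by ring) (by ring)
  · intro t t0 t1
    exact ⟨by omega, not_top hx' (by omega)⟩
  · omega

lemma op_refln {x : ℤ} (hn : 1 ≤ n) (hnm : n ≤ m) (h0 : (0 : ℤ) ∉ X) (hx : x ∉ X)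
    (hx' : n - x ∉ X) (x0 : 0 ≤ x) (xn : x ≤ n)
    (h : TR n m X x) : TR n m X (n - x) := by
  have h1 := to_bot hx x0 (by omega) h
  have h2 : ReachesK (n + 1) (m + 1) (topB X) (1, 1) (n - x + 1, 1) := by
    refine reach_move n m X _ _ (-1) (-1) x _ _ (by omega) h1 dUL ?_ ?_ (by ring) (by ring)
    · intro t t0 t1
      exact ⟨by omega, not_top h0 (by omega)⟩
    · omega
  refine reach_move n m X _ _ (-1) 1 (n - x) _ _ (by omega) h2 dUR ?_ ?_ (by ring) (by ring)
  · intro t t0 t1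
    exact ⟨by omega, not_top hx' (by omega)⟩
  · omega

lemma op_reflm {x : ℤ} (hnm : n ≤ m) (h0 : (0 : ℤ) ∉ X) (hx : x ∉ X)
    (hx' : m - x ∉ X) (x0 : 1 ≤ x) (xn : x ≤ n)
    (h : TR n m X x) : TR n m X (m - x) := by
  have h1 := to_left hnm h0 hx (by omega) xn h
  have h2 : ReachesK (n + 1) (m + 1) (topB X) (1, 1) (x + 1, m + 1) := by
    refine reach_move n m X _ _ 0 1 m _ _ (by omega) h1 dR ?_ ?_ (by ring) (by ring)
    · intro t t0 t1
      exact ⟨by omega, by omega⟩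
    · omega
  refine reach_move n m X _ _ (-1) (-1) x _ _ (by omega) h2 dUL ?_ ?_ (by ring) (by ring)
  · intro t t0 t1
    exact ⟨by omega, not_top hx' (by omega)⟩
  · omega

lemma top_right {a e : ℤ} (a0 : 0 ≤ a) (ae : a < e) (em : e ≤ m) (he : e ∈ X)
    (hno : ∀ y ∈ X, ¬ (a ≤ y ∧ y < e)) (h : TR n m X a) : TR n m X (e - 1) := by
  refine reach_move n m X 1 (a + 1) 0 1 (e - 1 - a) _ _ (by omega) h dR ?_ ?_ (by ring) (by ring)
  · intro t t0 t1
    exact ⟨by omega, fun hh => hno _ hh.2 (by omega)⟩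
  · intro hh
    apply hh.2
    refine ⟨by ring, ?_⟩
    have : a + 1 + (e - 1 - a + 1) * 1 - 1 = e := by ring
    rwa [this]

lemma top_left {a e : ℤ} (a0 : a ≤ m) (ae : e < a) (em : 0 ≤ e) (he : e ∈ X)
    (hno : ∀ y ∈ X, ¬ (e < y ∧ y ≤ a)) (h : TR n m X a) : TR n m X (e + 1) := by
  refine reach_move n m X 1 (a + 1) 0 (-1) (a - e - 1) _ _ (by omega) h dL ?_ ?_
    (by ring) (by ring)
  · intro t t0 t1
    exact ⟨by omega, fun hh => hno _ hh.2 (by omega)⟩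
  · intro hh
    apply hh.2
    refine ⟨by ring, ?_⟩
    have : a + 1 + (a - e - 1 + 1) * (-1) - 1 = e := by ring
    rwa [this]

lemma Good.not_mem {g x z : ℤ} (hG : Good g X z) (h : g ∣ x - z ∨ g ∣ x + z) : x ∉ X := by
  intro hx
  rcases h with h | h
  · exact (hG x hx).1 h
  · exact (hG x hx).2 h

lemma Good.congr {g z w : ℤ} (hG : Good g X z) (h : g ∣ w - z ∨ g ∣ w + z) : Good g X w := by
  intro y hy
  obtain ⟨h1, h2⟩ := hG y hy
  rcases h with h | h
  · refine ⟨fun h' => h1 ?_, fun h' => h2 ?_⟩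
    · have := dvd_add h' h; ring_nf at this ⊢; exact this
    · have := dvd_sub h' h; ring_nf at this ⊢; exact this
  · refine ⟨fun h' => h2 ?_, fun h' => h1 ?_⟩
    · have := dvd_add h' h; ring_nf at this ⊢; exact this
    · have := dvd_sub h' h; ring_nf at this ⊢; exact this

lemma shift_n {g : ℤ} (hn : 1 ≤ n) (hg : g ∣ n) {z : ℤ} (hG : Good g X z)
    (z0 : 0 ≤ z) (zm : z ≤ m) (h : TR n m X z) (k : ℕ) :
    (z + n * k ≤ m → TR n m X (z + n * k)) ∧ (0 ≤ z - n * k → TR n m X (z - n * k)) := by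
  induction k with
  | zero => simp [h]
  | succ k ih =>
    have hk : (0 : ℤ) ≤ n * k := by positivity
    have e1 : g ∣ (n : ℤ) * k := Dvd.dvd.mul_right hg _
    have e2 : g ∣ (n : ℤ) * k + n := dvd_add e1 hg
    push_cast
    constructor
    · intro hle
      have h1 := ih.1 (by nlinarith)
      have : z + (n : ℤ) * (k + 1) = z + n * k + n := by ring
      rw [this] at hle ⊢
      refine op_addn hn (hG.not_mem (Or.inl ?_)) (hG.not_mem (Or.inl ?_)) (by omega) hle h1
      · ring_nf; ring_nf at e1; exact e1
      · have : z + (n : ℤ) * k + n - z = n * k + n := by ring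
        rw [this]; exact e2
    · intro hle
      have h1 := ih.2 (by nlinarith)
      have : z - (n : ℤ) * (k + 1) = z - n * k - n := by ring
      rw [this] at hle ⊢
      refine op_subn hn (hG.not_mem (Or.inl ?_)) (hG.not_mem (Or.inl ?_)) hle (by omega) h1
      · have : z - (n : ℤ) * k - z = -(n * k) := by ring
        rw [this]; exact (dvd_neg).2 e1
      · have : z - (n : ℤ) * k - n - z = -(n * k + n) := by ring
        rw [this]; exact (dvd_neg).2 e2

lemma shift_n' {g : ℤ} (hn : 1 ≤ n) (hg : g ∣ n) {z : ℤ} (hG : Good g X z)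
    (z0 : 0 ≤ z) (zm : z ≤ m) (h : TR n m X z) (x : ℤ) (x0 : 0 ≤ x) (xm : x ≤ m)
    (hx : (n : ℤ) ∣ x - z) : TR n m X x := by
  obtain ⟨k, hk⟩ := hx
  rcases le_total 0 k with hk0 | hk0
  · obtain ⟨k, rfl⟩ := Int.eq_ofNat_of_zero_le hk0
    have hx : x = z + n * (k : ℤ) := by linarith
    rw [hx]
    exact (shift_n hn hg hG z0 zm h k).1 (by rw [← hx]; exact xm)
  · obtain ⟨j, hj⟩ := Int.eq_ofNat_of_zero_le (neg_nonneg.2 hk0)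
    have hk' : k = -(j : ℤ) := by linarith
    have hx : x = z - n * (j : ℤ) := by rw [hk'] at hk; linarith
    rw [hx]
    exact (shift_n hn hg hG z0 zm h j).2 (by rw [← hx]; exact x0)

/-- modulo `n`: all top squares congruent to `± z` -/
lemma fold_n {g : ℤ} (hn : 1 ≤ n) (hnm : n ≤ m) (h0 : (0 : ℤ) ∉ X) (hg : g ∣ n) {z : ℤ}
    (hG : Good g X z) (z0 : 0 ≤ z) (zm : z ≤ m) (h : TR n m X z) : Cl n m n X z := by
  intro x x0 xm hx
  rcases hx with hx | hx
  · exact shift_n' hn hg hG z0 zm h x x0 xm hx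
  · have hnpos : (0 : ℤ) < n := by exact_mod_cast hn
    have r0 := Int.emod_nonneg z hnpos.ne'
    have r1 := Int.emod_lt_of_pos z hnpos
    have hd : (n : ℤ) ∣ z % n - z := by
      have := Int.emod_add_mul_ediv z n
      exact ⟨-(z / n), by linarith⟩
    have t1 := shift_n' hn hg hG z0 zm h (z % n) r0 (by omega) hd
    have hd' : g ∣ z % n - z := hg.trans hd
    have hd2 : (n : ℤ) ∣ (n - z % n) + z := by
      have := dvd_sub (dvd_refl (n : ℤ)) hd
      have e : (n : ℤ) - (z % n - z) = (n - z % n) + z := by ring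
      rwa [e] at this
    have t2 := op_refln hn hnm h0 (hG.not_mem (Or.inl hd'))
      (hG.not_mem (Or.inr (hg.trans hd2))) r0 r1.le t1
    refine shift_n' hn hg (hG.congr (Or.inr (hg.trans hd2))) (by omega) (by omega) t2 x x0 xm ?_
    have := dvd_sub hx hd2
    have e : x + z - (n - z % n + z) = x - (n - z % n) := by ring
    rwa [e] at this

lemma Cl.congr {g z w : ℤ} (hC : Cl n m g X z) (h : g ∣ w - z ∨ g ∣ w + z) : Cl n m g X w := by
  intro x x0 xm hx
  apply hC x x0 xm
  rcases h with h | h <;> rcases hx with hx | hx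
  · left; have := dvd_add hx h; ring_nf at this ⊢; exact this
  · right; have := dvd_sub hx h; ring_nf at this ⊢; exact this
  · right; have := dvd_add hx h; ring_nf at this ⊢; exact this
  · left; have := dvd_sub hx h; ring_nf at this ⊢; exact this

lemma fold_add {g : ℤ} (hn : 1 ≤ n) (hnm : n ≤ m) (h0 : (0 : ℤ) ∉ X) (hg : g ∣ n) (hgm : g ∣ m)
    {z : ℤ} (hG : Good g X z) (h : Cl n m n X z) : Cl n m n X (z + m) := by
  have hnpos : (0 : ℤ) < n := by exact_mod_cast hn
  have r0 := Int.emod_nonneg z hnpos.ne'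
  have r1 := Int.emod_lt_of_pos z hnpos
  have hd : (n : ℤ) ∣ z % n - z := by
    have := Int.emod_add_mul_ediv z n
    exact ⟨-(z / n), by linarith⟩
  have hd2 : (n : ℤ) ∣ (n - z % n) + z := by
    have := dvd_sub (dvd_refl (n : ℤ)) hd
    have e : (n : ℤ) - (z % n - z) = (n - z % n) + z := by ring
    rwa [e] at this
  have t1 := h (n - z % n) (by omega) (by omega) (Or.inr hd2)
  have hd3 : g ∣ (m - (n - z % n)) - z := by
    have := dvd_sub hgm (hg.trans hd2)
    have e : (m : ℤ) - (n - z % n + z) = (m - (n - z % n)) - z := by ring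
    rwa [e] at this
  have t2 := op_reflm hnm h0 (hG.not_mem (Or.inr (hg.trans hd2)))
    (hG.not_mem (Or.inl hd3)) (by omega) (by omega) t1
  refine (fold_n hn hnm h0 hg (hG.congr (Or.inl hd3)) (by omega) (by omega) t2).congr
    (Or.inl ?_)
  have e : z + m - (m - (n - z % n)) = (n - z % n) + z := by ring
  rw [e]; exact hd2

lemma fold_mul {g : ℤ} (hn : 1 ≤ n) (hnm : n ≤ m) (h0 : (0 : ℤ) ∉ X) (hg : g ∣ n) (hgm : g ∣ m)
    (k : ℕ) {z : ℤ} (hG : Good g X z) (h : Cl n m n X z) : Cl n m n X (z + m * k) := by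
  induction k with
  | zero => simpa using h
  | succ k ih =>
    have := fold_add hn hnm h0 hg hgm (z := z + m * k)
      (hG.congr (Or.inl (by
        have e : z + (m : ℤ) * k - z = m * k := by ring
        rw [e]; exact hgm.mul_right _))) ih
    have e : z + (m : ℤ) * ((k + 1 : ℕ) : ℤ) = z + m * k + m := by push_cast; ring
    rwa [e]

lemma conn (hn : 1 ≤ n) (hnm : n ≤ m) (h0 : (0 : ℤ) ∉ X) {z : ℤ}
    (hG : Good (Nat.gcd n m) X z) (z0 : 0 ≤ z) (zm : z ≤ m) (h : TR n m X z) :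
    Cl n m (Nat.gcd n m) X z := by
  have hg : ((Nat.gcd n m : ℕ) : ℤ) ∣ n := by exact_mod_cast Nat.gcd_dvd_left n m
  have hgm : ((Nat.gcd n m : ℕ) : ℤ) ∣ m := by exact_mod_cast Nat.gcd_dvd_right n m
  have key : ∀ w : ℤ, ((Nat.gcd n m : ℕ) : ℤ) ∣ w - z → Cl n m n X w := by
    rintro w ⟨q, hq⟩
    have hb := Nat.gcd_eq_gcd_ab n m
    rw [hb] at hq
    have hC := fold_n hn hnm h0 hg hG z0 zm h
    rcases le_total 0 (Nat.gcdB n m * q) with hk0 | hk0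
    · obtain ⟨k, hk⟩ := Int.eq_ofNat_of_zero_le hk0
      refine (fold_mul hn hnm h0 hg hgm k hG hC).congr (Or.inl ⟨Nat.gcdA n m * q, ?_⟩)
      rw [← hk]; linear_combination hq
    · obtain ⟨k, hk⟩ := Int.eq_ofNat_of_zero_le (neg_nonneg.2 hk0)
      have hC' : Cl n m n X (-z) := hC.congr (Or.inr (by simp))
      have hG' : Good (Nat.gcd n m) X (-z) := hG.congr (Or.inr (by simp))
      refine (fold_mul hn hnm h0 hg hgm k hG' hC').congr (Or.inr ⟨Nat.gcdA n m * q, ?_⟩)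
      rw [← hk]; linear_combination hq
  intro x x0 xm hx
  rcases hx with hx | hx
  · exact key x hx x x0 xm (Or.inl (by simp))
  · refine key (-x) ?_ x x0 xm (Or.inr (by simp))
    rw [← dvd_neg]; ring_nf; ring_nf at hx; exact hx

end ops

/-- Folded residue of the `i`-th block. -/
def cc (g i : ℕ) : ℕ := if 2 * (4 * i + 3) ≤ g then 4 * i + 3 else 4 * i + 1

/-- Column of the `i`-th block. -/
def xp (g i : ℕ) : ℤ := if i % 2 = 0 then (cc g i : ℤ) else (g : ℤ) - cc g i

/-- All block columns. -/
def XX (g b : ℕ) : Finset ℤ := (Finset.range b).image (xp g)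

lemma mem_XX {g b : ℕ} {y : ℤ} : y ∈ XX g b ↔ ∃ i < b, xp g i = y := by
  simp [XX]

/-- Numbers with even symmetric residue have a block-free class. -/
lemma good_even {g b : ℕ} (hb : b = (g - 3 + 7) / 8) {k q x : ℤ} (hx : x = g * q + 2 * k)
    (h1 : -(g : ℤ) ≤ 4 * k) (h2 : 4 * k ≤ g) : Good g (XX g b) x := by
  have aux : ∀ c u : ℤ, c % 2 = 1 → 0 < c → 2 * c ≤ g → -(g : ℤ) ≤ 2 * u → 2 * u ≤ g →
      u % 2 = 0 → ¬ (g : ℤ) ∣ c + u := by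
    rintro c u hc hc0 hcg hu1 hu2 hu ⟨w, hw⟩
    have hgp : (0 : ℤ) < g := by omega
    have hw1 : w ≤ 1 := by nlinarith
    have hw2 : 0 ≤ w := by
      by_contra hneg
      have : w ≤ -1 := by omega
      nlinarith
    have : w = 0 ∨ w = 1 := by omega
    rcases this with rfl | rfl <;> omega
  intro y hy
  obtain ⟨i, hi, rfl⟩ := mem_XX.1 hy
  have hc : cc g i % 2 = 1 ∧ 0 < cc g i ∧ 2 * cc g i ≤ g := by
    unfold cc; split_ifs <;> omega
  have a1 := aux (cc g i) (2 * k) (by omega) (by omega) (by omega) (by omega) (by omega)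
    (by omega)
  have a2 := aux (cc g i) (-(2 * k)) (by omega) (by omega) (by omega) (by omega) (by omega)
    (by omega)
  subst hx
  unfold xp
  split_ifs
  · refine ⟨fun h => a2 ?_, fun h => a1 ?_⟩
    · have := dvd_add h (Dvd.intro q rfl); ring_nf at this ⊢; exact this
    · have := dvd_sub h (Dvd.intro q rfl); ring_nf at this ⊢; exact this
  · refine ⟨fun h => a1 ?_, fun h => a2 ?_⟩
    · have := dvd_sub (dvd_sub (Dvd.intro 1 rfl) h) (Dvd.intro q rfl)
      ring_nf at this ⊢; exact this
    · have := dvd_add (dvd_sub (Dvd.intro 1 rfl) h) (Dvd.intro q rfl)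
      ring_nf at this ⊢; exact this

section main
variable {n m : ℕ}

lemma zero_not_mem (g b : ℕ) (hb : b = (g - 3 + 7) / 8) : ∀ y ∈ XX g b, 0 < y ∧ y < g := by
  intro y hy
  obtain ⟨i, hi, rfl⟩ := mem_XX.1 hy
  unfold xp cc; split_ifs <;> omega

/-- One slide along the top row towards block `i`, starting from class `s` on its outer side. -/
lemma step_in (hn : 1 ≤ n) (hnm : n ≤ m) {g b : ℕ} (hg : g = Nat.gcd n m)
    (hb : b = (g - 3 + 7) / 8) {i s : ℕ} (hi : i < b) (hs : s < cc g i)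
    (hno : ∀ j < b, j % 2 = i % 2 → ¬ (s ≤ cc g j ∧ cc g j < cc g i))
    (hC : Cl n m g (XX g b) s) : Cl n m g (XX g b) ((cc g i : ℤ) - 1) := by
  have hgm : g ≤ m := hg ▸ Nat.le_of_dvd (by omega) (Nat.gcd_dvd_right n m)
  have hX := zero_not_mem g b hb
  have h0 : (0 : ℤ) ∉ XX g b := fun h => by have := hX 0 h; omega
  have hc : ∀ j < b, cc g j % 2 = 1 ∧ 0 < cc g j ∧ 2 * cc g j ≤ g := by
    intro j hj; unfold cc; split_ifs <;> omega
  have hci := hc i hi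
  have hmem : xp g i ∈ XX g b := mem_XX.2 ⟨i, hi, rfl⟩
  have hgood : Good g (XX g b) ((cc g i : ℤ) - 1) :=
    good_even hb (k := ((cc g i : ℤ) - 1) / 2) (q := 0) (by omega) (by omega) (by omega)
  by_cases hpar : i % 2 = 0
  · have hxi : xp g i = cc g i := by simp [xp, hpar]
    rw [hxi] at hmem
    have hT := hC s (by omega) (by omega) (Or.inl (by simp))
    have := top_right (a := s) (e := cc g i) (by omega) (by omega) (by omega) hmem (by
      intro y hy hyy
      obtain ⟨j, hj, rfl⟩ := mem_XX.1 hy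
      have hcj := hc j hj
      have hnj := hno j hj
      unfold xp at hyy
      split_ifs at hyy <;> omega) hT
    have hcon := @conn n m (XX g b) hn hnm h0 ((cc g i : ℤ) - 1)
    rw [← hg] at hcon
    exact hcon hgood (by omega) (by omega) this
  · have hxi : xp g i = g - cc g i := by simp [xp, hpar]
    rw [hxi] at hmem
    have hT := hC (g - s) (by omega) (by omega) (Or.inr (by simp))
    have := top_left (a := g - s) (e := g - cc g i) (by omega) (by omega) (by omega) hmem (by
      intro y hy hyy
      obtain ⟨j, hj, rfl⟩ := mem_XX.1 hy
      have hcj := hc j hj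
      have hnj := hno j hj
      unfold xp at hyy
      split_ifs at hyy <;> omega) hT
    have hd : (g : ℤ) ∣ (g - cc g i + 1) + ((cc g i : ℤ) - 1) := ⟨1, by ring⟩
    have hgood' := hgood.congr (w := (g : ℤ) - cc g i + 1) (Or.inr hd)
    have hfin : Cl n m g (XX g b) ((g : ℤ) - cc g i + 1) := by
      have hcon := @conn n m (XX g b) hn hnm h0 ((g : ℤ) - cc g i + 1)
      rw [← hg] at hcon
      exact hcon hgood' (by omega) (by omega) this
    exact hfin.congr (Or.inr (by rw [add_comm]; exact hd))

/-- One slide along the top row towards block `i`, starting from its inner side. -/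
lemma step_out (hn : 1 ≤ n) (hnm : n ≤ m) {g b : ℕ} (hg : g = Nat.gcd n m)
    (hb : b = (g - 3 + 7) / 8) {i s : ℕ} (hi : i < b) (hs : cc g i < s) (hsg : s ≤ g)
    (hcg : 2 * (cc g i + 1) ≤ g)
    (hno : ∀ j < b, j % 2 = i % 2 → ¬ (cc g i < cc g j ∧ cc g j ≤ s))
    (hno' : ∀ j < b, j % 2 ≠ i % 2 → ¬ (cc g i + cc g j < g ∧ g ≤ s + cc g j))
    (hC : Cl n m g (XX g b) s) : Cl n m g (XX g b) ((cc g i : ℤ) + 1) := by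
  have hgm : g ≤ m := hg ▸ Nat.le_of_dvd (by omega) (Nat.gcd_dvd_right n m)
  have hX := zero_not_mem g b hb
  have h0 : (0 : ℤ) ∉ XX g b := fun h => by have := hX 0 h; omega
  have hc : ∀ j < b, cc g j % 2 = 1 ∧ 0 < cc g j ∧ 2 * cc g j ≤ g := by
    intro j hj; unfold cc; split_ifs <;> omega
  have hci := hc i hi
  have hmem : xp g i ∈ XX g b := mem_XX.2 ⟨i, hi, rfl⟩
  have hgood : Good g (XX g b) ((cc g i : ℤ) + 1) :=
    good_even hb (k := ((cc g i : ℤ) + 1) / 2) (q := 0) (by omega) (by omega) (by omega)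
  by_cases hpar : i % 2 = 0
  · have hxi : xp g i = cc g i := by simp [xp, hpar]
    rw [hxi] at hmem
    have hT := hC s (by omega) (by omega) (Or.inl (by simp))
    have := top_left (a := s) (e := cc g i) (by omega) (by omega) (by omega) hmem (by
      intro y hy hyy
      obtain ⟨j, hj, rfl⟩ := mem_XX.1 hy
      have hcj := hc j hj
      have hnj := hno j hj
      have hnj' := hno' j hj
      unfold xp at hyy
      split_ifs at hyy <;> omega) hT
    have hcon := @conn n m (XX g b) hn hnm h0 ((cc g i : ℤ) + 1)
    rw [← hg] at hcon
    exact hcon hgood (by omega) (by omega) this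
  · have hxi : xp g i = g - cc g i := by simp [xp, hpar]
    rw [hxi] at hmem
    have hT := hC (g - s) (by omega) (by omega) (Or.inr (by simp))
    have := top_right (a := g - s) (e := g - cc g i) (by omega) (by omega) (by omega) hmem (by
      intro y hy hyy
      obtain ⟨j, hj, rfl⟩ := mem_XX.1 hy
      have hcj := hc j hj
      have hnj := hno j hj
      have hnj' := hno' j hj
      unfold xp at hyy
      split_ifs at hyy <;> omega) hT
    have hd : (g : ℤ) ∣ (g - cc g i - 1) + ((cc g i : ℤ) + 1) := ⟨1, by ring⟩
    have hgood' := hgood.congr (w := (g : ℤ) - cc g i - 1) (Or.inr hd)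
    have hfin : Cl n m g (XX g b) ((g : ℤ) - cc g i - 1) := by
      have hcon := @conn n m (XX g b) hn hnm h0 ((g : ℤ) - cc g i - 1)
      rw [← hg] at hcon
      exact hcon hgood' (by omega) (by omega) this
    exact hfin.congr (Or.inr (by rw [add_comm]; exact hd))

lemma cl_zero (hn : 1 ≤ n) (hnm : n ≤ m) {g b : ℕ} (hg : g = Nat.gcd n m)
    (hb : b = (g - 3 + 7) / 8) : Cl n m g (XX g b) 0 := by
  have hX := zero_not_mem g b hb
  have h0 : (0 : ℤ) ∉ XX g b := fun h => by have := hX 0 h; omega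
  have hcon := @conn n m (XX g b) hn hnm h0 0
  rw [← hg] at hcon
  refine hcon (good_even hb (k := 0) (q := 0) (by simp) (by simp) (by simp)) le_rfl (by simp) ?_
  exact Relation.ReflTransGen.refl

lemma cl_in (hn : 1 ≤ n) (hnm : n ≤ m) {g b : ℕ} (hg : g = Nat.gcd n m)
    (hb : b = (g - 3 + 7) / 8) (i : ℕ) : i < b → Cl n m g (XX g b) ((cc g i : ℤ) - 1) := by
  have hz := cl_zero hn hnm hg hb
  induction i with
  | zero =>
    intro hi
    refine step_in hn hnm hg hb (s := 0) hi ?_ ?_ (by simpa using hz)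
    · unfold cc; split_ifs <;> omega
    · intro j hj _; unfold cc; split_ifs <;> omega
  | succ i ih =>
    intro hi
    by_cases h1 : i = 0
    · subst h1
      refine step_in hn hnm hg hb (s := 0) hi ?_ ?_ (by simpa using hz)
      · unfold cc; split_ifs <;> omega
      · intro j hj _; unfold cc; split_ifs <;> omega
    · have hprev := ih (by omega)
      have hc : cc g i = 4 * i + 3 := by unfold cc; split_ifs <;> omega
      refine step_in hn hnm hg hb (s := 4 * i + 2) hi ?_ ?_ ?_
      · unfold cc; split_ifs <;> omega
      · intro j hj _; unfold cc; split_ifs <;> omega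
      · rw [hc] at hprev
        have e : (((4 * i + 3 : ℕ) : ℤ) - 1) = ((4 * i + 2 : ℕ) : ℤ) := by push_cast; ring
        rwa [e] at hprev

lemma cl_out (hn : 1 ≤ n) (hnm : n ≤ m) {g b : ℕ} (hg : g = Nat.gcd n m)
    (hb : b = (g - 3 + 7) / 8) (i : ℕ) (hi : i < b) (hcg : 2 * (cc g i + 1) ≤ g) :
    Cl n m g (XX g b) ((cc g i : ℤ) + 1) := by
  by_cases hl : i + 1 < b
  · have hc : cc g i = 4 * i + 3 := by unfold cc; split_ifs <;> omega
    have hA := cl_in hn hnm hg hb (i + 1) hl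
    by_cases h2 : 2 * (4 * (i + 1) + 3) ≤ g
    · have hc2 : cc g (i + 1) = 4 * i + 7 := by unfold cc; rw [if_pos h2]; ring
      refine step_out hn hnm hg hb (s := 4 * i + 6) hi (by omega) (by omega) hcg ?_ ?_ ?_
      · intro j hj _; unfold cc; split_ifs <;> omega
      · intro j hj _; unfold cc; split_ifs <;> omega
      · rw [hc2] at hA
        have e : (((4 * i + 7 : ℕ) : ℤ) - 1) = ((4 * i + 6 : ℕ) : ℤ) := by push_cast; ring
        rwa [e] at hA
    · have hc2 : cc g (i + 1) = 4 * i + 5 := by unfold cc; rw [if_neg h2]; ring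
      rw [hc2] at hA
      rw [hc]
      have e : (((4 * i + 5 : ℕ) : ℤ) - 1) = ((4 * i + 3 : ℕ) : ℤ) + 1 := by push_cast; ring
      rwa [e] at hA
  · have hA := cl_in hn hnm hg hb i hi
    have hpos : 0 < cc g i := by unfold cc; split_ifs <;> omega
    refine step_out hn hnm hg hb (s := g - (cc g i - 1)) hi (by omega) (by omega) hcg ?_ ?_ ?_
    · intro j hj _; unfold cc; split_ifs <;> omega
    · intro j hj _; unfold cc; split_ifs <;> omega
    · refine hA.congr (Or.inr ⟨1, ?_⟩)
      omega

lemma cl_even (hn : 1 ≤ n) (hnm : n ≤ m) {g b : ℕ} (hg : g = Nat.gcd n m)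
    (hb : b = (g - 3 + 7) / 8) (k : ℕ) (hk : 4 * k ≤ g) :
    Cl n m g (XX g b) (2 * (k : ℤ)) := by
  by_cases h0 : k = 0
  · subst h0; simpa using cl_zero hn hnm hg hb
  have hgpos : 4 ≤ g := by omega
  rcases Nat.even_or_odd' k with ⟨i, hi | hi⟩
  · -- residue 4 (i-1) + 4
    obtain ⟨j, rfl⟩ : ∃ j, i = j + 1 := ⟨i - 1, by omega⟩
    have hj : j < b := by omega
    have hc : cc g j = 4 * j + 3 := by unfold cc; split_ifs <;> omega
    have := cl_out hn hnm hg hb j hj (by omega)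
    rw [hc] at this
    have e : 2 * (k : ℤ) = ((4 * j + 3 : ℕ) : ℤ) + 1 := by subst hi; push_cast; ring
    rwa [e]
  · have hj : i < b := by omega
    by_cases h2 : 2 * (4 * i + 3) ≤ g
    · have hc : cc g i = 4 * i + 3 := by unfold cc; rw [if_pos h2]
      have := cl_in hn hnm hg hb i hj
      rw [hc] at this
      have e : 2 * (k : ℤ) = ((4 * i + 3 : ℕ) : ℤ) - 1 := by subst hi; push_cast; ring
      rwa [e]
    · have hc : cc g i = 4 * i + 1 := by unfold cc; rw [if_neg h2]
      have := cl_out hn hnm hg hb i hj (by omega)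
      rw [hc] at this
      have e : 2 * (k : ℤ) = ((4 * i + 1 : ℕ) : ℤ) + 1 := by subst hi; push_cast; ring
      rwa [e]

/-- even symmetric residue modulo `g` -/
def Ev (g : ℕ) (x : ℤ) : Prop := ∃ q k : ℤ, x = g * q + 2 * k ∧ -(g : ℤ) ≤ 4 * k ∧ 4 * k ≤ g

lemma ev_TR (hn : 1 ≤ n) (hnm : n ≤ m) {g b : ℕ} (hg : g = Nat.gcd n m)
    (hb : b = (g - 3 + 7) / 8) {x : ℤ} (hx : Ev g x) (x0 : 0 ≤ x) (xm : x ≤ m) :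
    TR n m (XX g b) x ∧ x ∉ XX g b := by
  obtain ⟨q, k, hxe, k1, k2⟩ := hx
  refine ⟨?_, (good_even hb hxe k1 k2).not_mem (Or.inl (by simp))⟩
  have hC := cl_even hn hnm hg hb k.natAbs (by omega)
  refine hC x x0 xm ?_
  rcases le_total 0 k with hk | hk
  · left; refine ⟨q, ?_⟩
    have : ((k.natAbs : ℕ) : ℤ) = k := by omega
    rw [this]; linarith
  · right; refine ⟨q, ?_⟩
    have : ((k.natAbs : ℕ) : ℤ) = -k := by omega
    rw [this]; linarith

lemma symm_res (g : ℕ) (hg : 0 < g) (x : ℤ) :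
    ∃ q r : ℤ, x = g * q + r ∧ -(g : ℤ) ≤ 2 * r ∧ 2 * r ≤ g := by
  have h := Int.emod_add_mul_ediv x g
  have h1 := Int.emod_nonneg x (show (g : ℤ) ≠ 0 by omega)
  have h2 := Int.emod_lt_of_pos x (show (0 : ℤ) < g by omega)
  by_cases hh : 2 * (x % g) ≤ g
  · exact ⟨x / g, x % g, by linarith, by omega, hh⟩
  · exact ⟨x / g + 1, x % g - g, by linarith, by omega, by omega⟩

lemma ev_cases (g : ℕ) (hg : 0 < g) (i j : ℤ) : Ev g i ∨ Ev g j ∨ Ev g (i + j) ∨ Ev g (i - j) := by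
  obtain ⟨q, r, hi, r1, r2⟩ := symm_res g hg i
  obtain ⟨q', r', hj, r1', r2'⟩ := symm_res g hg j
  by_cases h1 : r % 2 = 0
  · left; exact ⟨q, r / 2, by omega, by omega, by omega⟩
  by_cases h2 : r' % 2 = 0
  · right; left; exact ⟨q', r' / 2, by omega, by omega, by omega⟩
  by_cases h3 : -(g : ℤ) ≤ 2 * (r + r') ∧ 2 * (r + r') ≤ g
  · right; right; left
    refine ⟨q + q', (r + r') / 2, ?_, by omega, by omega⟩
    have : 2 * ((r + r') / 2) = r + r' := by omega
    rw [this, hi, hj]; ring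
  · right; right; right
    refine ⟨q - q', (r - r') / 2, ?_, by omega, by omega⟩
    have : 2 * ((r - r') / 2) = r - r' := by omega
    rw [this, hi, hj]; ring

/-- next to a column with odd symmetric residue there is one with even residue -/
lemma ev_neighbor {g : ℕ} (hg : 0 < g) (hgm : (g : ℤ) ∣ m) {x : ℤ} (x0 : 0 ≤ x) (xm : x ≤ m)
    (hx : ¬ Ev g x) : (1 ≤ x ∧ Ev g (x - 1)) ∨ (x + 1 ≤ m ∧ Ev g (x + 1)) := by
  obtain ⟨q, r, hi, r1, r2⟩ := symm_res g hg x
  have hodd : r % 2 = 1 := by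
    by_contra h
    exact hx ⟨q, r / 2, by omega, by omega, by omega⟩
  rcases le_total 0 r with hr | hr
  · by_cases hx1 : 1 ≤ x
    · left; exact ⟨hx1, q, (r - 1) / 2, by omega, by omega, by omega⟩
    · exfalso
      have : x = 0 := by omega
      exact hx ⟨0, 0, by simp [this], by simp, by simp⟩
  · by_cases hx1 : x + 1 ≤ m
    · right; exact ⟨hx1, q, (r + 1) / 2, by omega, by omega, by omega⟩
    · exfalso
      have : x = m := by omega
      obtain ⟨w, hw⟩ := hgm
      exact hx ⟨w, 0, by rw [this, hw]; ring, by simp, by simp⟩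

lemma solves (hn : 1 ≤ n) (hnm : n ≤ m) {g b : ℕ} (hg : g = Nat.gcd n m)
    (hb : b = (g - 3 + 7) / 8) : SolvesPassK (n + 1) (m + 1) (topB (XX g b)) := by
  have hX := zero_not_mem g b hb
  have h0 : (0 : ℤ) ∉ XX g b := fun h => by have := hX 0 h; omega
  have hgpos : 0 < g := hg ▸ Nat.gcd_pos_of_pos_left m (by omega)
  have hgm : g ≤ m := hg ▸ Nat.le_of_dvd (by omega) (Nat.gcd_dvd_right n m)
  have hdm : (g : ℤ) ∣ m := by rw [hg]; exact_mod_cast Nat.gcd_dvd_right n m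
  have hE : ∀ x : ℤ, Ev g x → 0 ≤ x → x ≤ m → TR n m (XX g b) x ∧ x ∉ XX g b :=
    fun x hx x0 xm => ev_TR hn hnm hg hb hx x0 xm
  have hneg : ∀ x : ℤ, Ev g x → Ev g (-x) := by
    rintro x ⟨q, k, h1, h2, h3⟩
    exact ⟨-q, -k, by rw [h1]; ring, by omega, by omega⟩
  have hsub : ∀ x : ℤ, Ev g x → Ev g (m - x) := by
    rintro x ⟨q, k, h1, h2, h3⟩
    obtain ⟨w, hw⟩ := hdm
    exact ⟨w - q, -k, by rw [h1, hw]; ring, by omega, by omega⟩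
  refine ⟨⟨?_, ?_⟩, ?_⟩
  · rw [mem_topB]; simpa using h0
  · rintro ⟨a, c⟩ hp
    rw [mem_topB] at hp
    have := hX _ hp.2
    unfold inGrid
    push_cast
    omega
  rintro ⟨u, v⟩ hin hB
  rw [mem_topB] at hB
  unfold inGrid at hin
  push_cast at hin
  obtain ⟨u1, u2, v1, v2⟩ := hin
  -- the column argument
  have hcol : Ev g (v - 1) → PassesK (n + 1) (m + 1) (topB (XX g b)) (1, 1) (u, v) := by
    intro hv
    obtain ⟨hT, hnot⟩ := hE (v - 1) hv (by omega) (by omega)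
    refine pass_of_s10 n m _ 1 (v - 1 + 1) 1 0 (u - 1) u v dD (by omega) hT ?_ (by ring) (by ring)
    intro t t0 t1
    exact ⟨by omega, not_top hnot (by omega)⟩
  by_cases hv : Ev g (v - 1)
  · exact hcol hv
  by_cases hu : u = 1
  · subst hu
    rcases ev_neighbor hgpos hdm (by omega) (by omega) hv with ⟨h1, h2⟩ | ⟨h1, h2⟩
    · obtain ⟨hT, hnot⟩ := hE _ h2 (by omega) (by omega)
      refine pass_of_s10 n m _ 1 (v - 1 - 1 + 1) 0 1 1 1 v dR (by omega) hT ?_ (by ring) (by ring)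
      intro t t0 t1
      refine ⟨by omega, fun hh => ?_⟩
      have : t = 0 ∨ t = 1 := by omega
      rcases this with rfl | rfl
      · apply hnot; convert hh.2 using 1; ring
      · apply hB; refine ⟨rfl, ?_⟩; convert hh.2 using 1; ring
    · obtain ⟨hT, hnot⟩ := hE _ h2 (by omega) (by omega)
      refine pass_of_s10 n m _ 1 (v - 1 + 1 + 1) 0 (-1) 1 1 v dL (by omega) hT ?_ (by ring) (by ring)
      intro t t0 t1
      refine ⟨by omega, fun hh => ?_⟩
      have : t = 0 ∨ t = 1 := by omega
      rcases this with rfl | rfl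
      · apply hnot; convert hh.2 using 1; ring
      · apply hB; refine ⟨rfl, ?_⟩; convert hh.2 using 1; ring
  have hu' : 2 ≤ u := by omega
  -- the left column
  have hleft : ∀ y : ℤ, Ev g y → 0 ≤ y → y ≤ n →
      ReachesK (n + 1) (m + 1) (topB (XX g b)) (1, 1) (y + 1, 1) := by
    intro y hy y0 yn
    obtain ⟨hT, hnot⟩ := hE y hy y0 (by omega)
    exact to_left hnm h0 hnot y0 yn hT
  rcases ev_cases g hgpos (u - 1) (v - 1) with h | h | h | h
  · refine pass_of_s10 n m _ (u - 1 + 1) 1 0 1 (v - 1) u v dR (by omega)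
      (hleft _ h (by omega) (by omega)) ?_ (by ring) (by ring)
    intro t t0 t1
    exact ⟨by omega, by omega⟩
  · exact hcol h
  · by_cases hs : u - 1 + (v - 1) ≤ m
    · obtain ⟨hT, hnot⟩ := hE _ h (by omega) hs
      refine pass_of_s10 n m _ 1 (u - 1 + (v - 1) + 1) 1 (-1) (u - 1) u v dDL (by omega) hT ?_
        (by ring) (by ring)
      intro t t0 t1
      exact ⟨by omega, not_top hnot (by omega)⟩
    · have h' : Ev g (m - (u - 1 + (v - 1) - m)) := by
        obtain ⟨q, k, e1, e2, e3⟩ := h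
        obtain ⟨w, hw⟩ := hdm
        exact ⟨2 * w - q, -k, by rw [e1, hw]; ring, by omega, by omega⟩
      obtain ⟨hT, hnot⟩ := hE _ h' (by omega) (by omega)
      have hR := to_right (n := n) hnot hnm (by omega) (by omega) hT
      refine pass_of_s10 n m _ _ _ 1 (-1) (m + 1 - v) u v dDL (by omega) hR ?_
        (by ring) (by ring)
      intro t t0 t1
      exact ⟨by omega, by omega⟩
  · by_cases hs : v ≤ u
    · refine pass_of_s10 n m _ (u - 1 - (v - 1) + 1) 1 1 1 (v - 1) u v dDR (by omega)
        (hleft _ h (by omega) (by omega)) ?_ (by ring) (by ring)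
      intro t t0 t1
      exact ⟨by omega, not_top h0 (by omega)⟩
    · obtain ⟨hT, hnot⟩ := hE _ (hneg _ h) (by omega) (by omega)
      refine pass_of_s10 n m _ 1 (-(u - 1 - (v - 1)) + 1) 1 1 (u - 1) u v dDR (by omega) hT ?_
        (by ring) (by ring)
      intro t t0 t1
      exact ⟨by omega, not_top hnot (by omega)⟩

end main

/-- For all positive integers `m ≥ n`, the block-pass game on the King grid
`K_{n+1,m+1}` is solvable with at most `⌈(gcd(n,m) - 3)/8⌉` blocks (this bound being
`0` when `gcd(n,m) ≤ 3`). -/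
theorem stmt10 (n m : ℕ) (hn : 1 ≤ n) (hnm : n ≤ m) :
    optPBK (n + 1) (m + 1) ≤ (Nat.gcd n m - 3 + 7) / 8 := by
  have hs := solves hn hnm (g := Nat.gcd n m) rfl rfl
  refine le_trans (Nat.sInf_le ⟨_, hs, rfl⟩) ?_
  refine le_trans Finset.card_image_le ?_
  refine le_trans Finset.card_image_le ?_
  rw [Finset.card_range]
end

section
/- If m ≥ n are positive integers with gcd(n,m) > 3, then the block-pass sliding game on the King grid K_{n+1,m+1} has no solution with zero blocks; in particular, a robot starting at (1,1) with no blocks present can never pass over the square (2,3), hence opt^P_B(K_{n+1,m+1}) ≥ 1. -/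
/-- From a square whose (zero-based) coordinates are divisible by `g`, an unblocked slide has
length divisible by `g`. -/
lemma slide_dvd (n m : ℕ) (g : ℤ) (hgn : g ∣ n) (hgm : g ∣ m) (p d : Sq) (k : ℕ)
    (h1 : g ∣ p.1 - 1) (h2 : g ∣ p.2 - 1) (hd : d ∈ dirs8)
    (h : IsSlideK (n + 1) (m + 1) ∅ p d k) : g ∣ k := by
  obtain ⟨x, y⟩ := p
  obtain ⟨ha, hb⟩ := h
  have h0 := ha 0 (Nat.zero_le _)
  have hk := ha k le_rfl
  have e1 : g ∣ (n : ℤ) - (x - 1) := dvd_sub hgn h1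
  have e2 : g ∣ (m : ℤ) - (y - 1) := dvd_sub hgm h2
  have key : (k : ℤ) = x - 1 ∨ (k : ℤ) = y - 1 ∨ (k : ℤ) = n - (x - 1) ∨
      (k : ℤ) = m - (y - 1) := by
    simp only [dirs8, Set.mem_insert_iff, Set.mem_singleton_iff] at hd
    rcases hd with rfl | rfl | rfl | rfl | rfl | rfl | rfl | rfl <;>
    · simp [Free, inGrid] at h0 hk hb
      omega
  rcases key with h | h | h | h <;> rw [h] <;> assumption

/-- Every reachable stopping square has both zero-based coordinates divisible by `g`. -/
lemma reach_dvd (n m : ℕ) (g : ℤ) (hgn : g ∣ n) (hgm : g ∣ m) (p : Sq)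
    (h : ReachesK (n + 1) (m + 1) ∅ (1, 1) p) : g ∣ p.1 - 1 ∧ g ∣ p.2 - 1 := by
  unfold ReachesK at h
  induction h with
  | refl => simp
  | @tail b c _ hbc ih =>
    obtain ⟨d, hd, k, hs, rfl⟩ := hbc
    have hk := slide_dvd n m g hgn hgm b d k ih.1 ih.2 hd hs
    constructor
    · have : (b + (k : ℤ) • d).1 - 1 = (b.1 - 1) + k * d.1 := by simp; ring
      rw [this]
      exact dvd_add ih.1 (Dvd.dvd.mul_right hk _)
    · have : (b + (k : ℤ) • d).2 - 1 = (b.2 - 1) + k * d.2 := by simp; ring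
      rw [this]
      exact dvd_add ih.2 (Dvd.dvd.mul_right hk _)

lemma not_pass (n m : ℕ) (hgcd : 3 < Nat.gcd n m) :
    ¬ PassesK (n + 1) (m + 1) (∅ : Finset Sq) (1, 1) (2, 3) := by
  rintro ⟨p, hp, d, hd, k, t, -, -, hs⟩
  have hgn : ((Nat.gcd n m : ℕ) : ℤ) ∣ n := by exact_mod_cast Nat.gcd_dvd_left n m
  have hgm : ((Nat.gcd n m : ℕ) : ℤ) ∣ m := by exact_mod_cast Nat.gcd_dvd_right n m
  obtain ⟨h1, h2⟩ := reach_dvd n m _ hgn hgm p hp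
  have hg : (3 : ℤ) < (Nat.gcd n m : ℕ) := by exact_mod_cast hgcd
  generalize ((Nat.gcd n m : ℕ) : ℤ) = g at *
  obtain ⟨x, y⟩ := p
  have ha := dvd_add h1 h2
  have hb := dvd_sub h2 h1
  have no : ∀ c : ℤ, 0 < c → c ≤ 3 → ¬ g ∣ c := fun c h0 h3 h => by
    have := Int.le_of_dvd h0 h
    omega
  simp only [dirs8, Set.mem_insert_iff, Set.mem_singleton_iff] at hd
  have key : x - 1 = 1 ∨ y - 1 = 2 ∨ (x - 1) + (y - 1) = 3 ∨ (y - 1) - (x - 1) = 1 := by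
    rcases hd with rfl | rfl | rfl | rfl | rfl | rfl | rfl | rfl <;>
    · simp [Prod.ext_iff] at hs
      omega
  dsimp only at h1 h2 ha hb
  rcases key with h | h | h | h
  · exact no 1 (by norm_num) (by norm_num) (h ▸ h1)
  · exact no 2 (by norm_num) (by norm_num) (h ▸ h2)
  · exact no 3 (by norm_num) (by norm_num) (h ▸ ha)
  · exact no 1 (by norm_num) (by norm_num) (h ▸ hb)

/-- Blocking everything except `(1,1)` is a solution. -/
lemma exists_solution (N M : ℕ) (hN : 1 ≤ N) (hM : 1 ≤ M) :
    ∃ B : Finset Sq, SolvesPassK N M B := by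
  refine ⟨(Finset.Icc (1 : ℤ) N ×ˢ Finset.Icc (1 : ℤ) M).erase (1, 1), ⟨by simp, ?_⟩, ?_⟩
  · rintro ⟨x, y⟩ hp
    simp at hp
    simp [inGrid]
    omega
  · rintro ⟨x, y⟩ hp hB
    have hxy : ((x, y) : Sq) = (1, 1) := by
      by_contra hne
      apply hB
      simp only [inGrid] at hp
      simp only [Finset.mem_erase, Finset.mem_product, Finset.mem_Icc]
      exact ⟨hne, ⟨hp.1, hp.2.1⟩, hp.2.2⟩
    rw [hxy] at hp ⊢
    refine ⟨(1, 1), Relation.ReflTransGen.refl, (-1, 0), by simp [dirs8], 0, 0, ⟨?_, ?_⟩,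
      le_rfl, by simp⟩
    · intro t ht
      obtain rfl : t = 0 := by omega
      refine ⟨by simpa using hp, by simp⟩
    · rintro ⟨h, -⟩
      simp [inGrid] at h

/-- If `m ≥ n ≥ 1` and `gcd(n,m) > 3`, then the block-pass game on the King grid
`K_{n+1,m+1}` has no solution with zero blocks: with no blocks present, the robot
starting at `(1,1)` can never pass over the square `(2,3)`; hence
`opt^P_B(K_{n+1,m+1}) ≥ 1`. -/
theorem stmt11 (n m : ℕ) (hn : 1 ≤ n) (hnm : n ≤ m) (hgcd : 3 < Nat.gcd n m) :
    ¬ PassesK (n + 1) (m + 1) (∅ : Finset Sq) (1, 1) (2, 3) ∧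
    ¬ SolvesPassK (n + 1) (m + 1) (∅ : Finset Sq) ∧
    1 ≤ optPBK (n + 1) (m + 1) := by
  have hnp := not_pass n m hgcd
  have hn3 : 3 < n := lt_of_lt_of_le hgcd (Nat.gcd_le_left m hn)
  have hns : ¬ SolvesPassK (n + 1) (m + 1) (∅ : Finset Sq) := by
    intro h
    refine hnp (h.2 (2, 3) ?_ (by simp))
    simp [inGrid]
    omega
  refine ⟨hnp, hns, ?_⟩
  obtain ⟨B, hB⟩ := exists_solution (n + 1) (m + 1) (by omega) (by omega)
  rw [Nat.one_le_iff_ne_zero]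
  intro h0
  have hmem := Nat.sInf_mem
    (s := {k | ∃ B : Finset Sq, SolvesPassK (n + 1) (m + 1) B ∧ B.card = k}) ⟨_, B, hB, rfl⟩
  obtain ⟨C, hC, hc⟩ := hmem
  have : C.card = 0 := hc.trans h0
  rw [Finset.card_eq_zero] at this
  exact hns (this ▸ hC)
end
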